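/- arXiv:1303.6898 — 3 statements merged into one kernel-verified Lean document; each statement's English description precedes it below -/
import Mathlib

section
/- Every eigenvalue of the discontinuous Sturm–Liouville problem with transmission conditions is real: if (λ, y) is an eigenpair, then λ ∈ ℝ. -/
open Real MeasureTheory intervalIntegral

lemma key_aux (a b : ℝ) (hab : a < b) (q : ℝ → ℝ) (lam : ℂ) (hl : lam.im ≠ 0)
    (y y' y'' : ℝ → ℂ)
    (hd : ∀ x ∈ Set.Icc a b, HasDerivAt y (y' x) x)
    (hd2 : ∀ x ∈ Set.Icc a b, HasDerivAt y' (y'' x) x)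
    (heq : ∀ x ∈ Set.Icc a b, -y'' x + (q x : ℂ) * y x = lam * y x)
    (F : ℝ → ℝ)
    (hF : F = fun x => -((y' x).im * (y x).re - (y' x).re * (y x).im) / lam.im) :
    F a ≤ F b ∧ (F b ≤ F a → ∀ x ∈ Set.Icc a b, y x = 0) := by
  have hre : ∀ (f : ℝ → ℂ) (f' : ℂ) (x : ℝ), HasDerivAt f f' x →
      HasDerivAt (fun t => (f t).re) f'.re x := fun f f' x h =>
    (Complex.reCLM.hasFDerivAt.comp_hasDerivAt x h)
  have him : ∀ (f : ℝ → ℂ) (f' : ℂ) (x : ℝ), HasDerivAt f f' x →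
      HasDerivAt (fun t => (f t).im) f'.im x := fun f f' x h =>
    (Complex.imCLM.hasFDerivAt.comp_hasDerivAt x h)
  have hFd : ∀ x ∈ Set.Icc a b, HasDerivAt F ((y x).re ^ 2 + (y x).im ^ 2) x := by
    intro x hx
    have h := ((((him _ _ x (hd2 x hx)).mul (hre _ _ x (hd x hx))).sub
      ((hre _ _ x (hd2 x hx)).mul (him _ _ x (hd x hx)))).neg).div_const lam.im
    rw [hF]
    refine h.congr_deriv ?_
    have e := heq x hx
    have e1 := congrArg Complex.re e
    have e2 := congrArg Complex.im e
    simp at e1 e2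
    rw [div_eq_iff hl]
    linear_combination (y x).re * e2 - (y x).im * e1
  have hmono : MonotoneOn F (Set.Icc a b) := by
    apply monotoneOn_of_deriv_nonneg (convex_Icc a b)
    · exact fun x hx => (hFd x hx).continuousAt.continuousWithinAt
    · exact fun x hx =>
        (hFd x (interior_subset hx)).differentiableAt.differentiableWithinAt
    · intro x hx
      rw [(hFd x (interior_subset hx)).deriv]
      positivity
  have ha : a ∈ Set.Icc a b := ⟨le_rfl, hab.le⟩
  have hb : b ∈ Set.Icc a b := ⟨hab.le, le_rfl⟩
  refine ⟨hmono ha hb hab.le, fun hba x hx => ?_⟩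
  have hc : ∀ t ∈ Set.Icc a b, F t = F a := fun t ht =>
    le_antisymm ((hmono ht hb ht.2).trans hba) (hmono ha ht ht.1)
  have h0 : HasDerivWithinAt F 0 (Set.Icc a b) x :=
    (hasDerivWithinAt_const x (Set.Icc a b) (F a)).congr hc (hc x hx)
  have h1 := (uniqueDiffOn_Icc hab x hx).eq_deriv _ (hFd x hx).hasDerivWithinAt h0
  apply Complex.ext
  · simp; nlinarith [sq_nonneg (y x).re, sq_nonneg (y x).im]
  · simp; nlinarith [sq_nonneg (y x).re, sq_nonneg (y x).im]

lemma bc_aux (α : ℝ) (u v : ℂ) (h : (Real.cos α : ℂ) * u + (Real.sin α : ℂ) * v = 0) :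
    v.im * u.re - v.re * u.im = 0 := by
  have e1 := congrArg Complex.re h
  have e2 := congrArg Complex.im h
  simp only [Complex.add_re, Complex.add_im, Complex.re_ofReal_mul, Complex.im_ofReal_mul,
    Complex.zero_re, Complex.zero_im] at e1 e2
  have h2 := Real.sin_sq_add_cos_sq α
  linear_combination (-(v.im * u.re - v.re * u.im)) * h2
    + Real.cos α * (v.im * e1 - v.re * e2) + Real.sin α * (u.re * e2 - u.im * e1)

/-- Every eigenvalue of the discontinuous Sturm–Liouville problem with
transmission conditions is real: if `(lam, y)` is an eigenpair (with `y = (y₁, y₂)`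
nonzero, C² on each subinterval, satisfying `Γy = lam • y` on both subintervals
and the transmission and boundary conditions), then `lam` is real. -/
theorem eigenvalues_real_of_transmission_sturm_liouville
    (q : ℝ → ℝ) (hq : ContinuousOn q (Set.Icc (-π) π))
    (a₁ a₂ a₃ a₄ b₁ b₂ b₃ b₄ α β : ℝ)
    (hρ₁₂ : 0 < a₁ * b₂ - a₂ * b₁) (hρ₃₄ : 0 < a₃ * b₄ - a₄ * b₃)
    (lam : ℂ)
    (y₁ y₁' y₁'' y₂ y₂' y₂'' : ℝ → ℂ)
    (hy₁d : ∀ x ∈ Set.Icc (-π) 0, HasDerivAt y₁ (y₁' x) x)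
    (hy₁d2 : ∀ x ∈ Set.Icc (-π) 0, HasDerivAt y₁' (y₁'' x) x)
    (hy₁c : ContinuousOn y₁'' (Set.Icc (-π) 0))
    (hy₂d : ∀ x ∈ Set.Icc 0 π, HasDerivAt y₂ (y₂' x) x)
    (hy₂d2 : ∀ x ∈ Set.Icc 0 π, HasDerivAt y₂' (y₂'' x) x)
    (hy₂c : ContinuousOn y₂'' (Set.Icc 0 π))
    (heq₁ : ∀ x ∈ Set.Icc (-π) 0, -y₁'' x + (q x : ℂ) * y₁ x = lam * y₁ x)
    (heq₂ : ∀ x ∈ Set.Icc 0 π, -y₂'' x + (q x : ℂ) * y₂ x = lam * y₂ x)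
    (hΓ₁ : (a₁ : ℂ) * y₁' 0 + (a₂ : ℂ) * y₁ 0 + (a₃ : ℂ) * y₂' 0 + (a₄ : ℂ) * y₂ 0 = 0)
    (hΓ₂ : (b₁ : ℂ) * y₁' 0 + (b₂ : ℂ) * y₁ 0 + (b₃ : ℂ) * y₂' 0 + (b₄ : ℂ) * y₂ 0 = 0)
    (hΓ₃ : (Real.cos α : ℂ) * y₁ (-π) + (Real.sin α : ℂ) * y₁' (-π) = 0)
    (hΓ₄ : (Real.cos β : ℂ) * y₂ π + (Real.sin β : ℂ) * y₂' π = 0)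
    (hne : ¬ ((∀ x ∈ Set.Icc (-π) 0, y₁ x = 0) ∧ (∀ x ∈ Set.Icc 0 π, y₂ x = 0))) :
    lam.im = 0 := by
  by_contra hl
  obtain ⟨hA, hA'⟩ := key_aux (-π) 0 (by linarith [Real.pi_pos]) q lam hl y₁ y₁' y₁''
    hy₁d hy₁d2 heq₁ _ rfl
  obtain ⟨hB, hB'⟩ := key_aux 0 π Real.pi_pos q lam hl y₂ y₂' y₂''
    hy₂d hy₂d2 heq₂ _ rfl
  have hL := bc_aux α _ _ hΓ₃
  have hR := bc_aux β _ _ hΓ₄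
  simp only [hL, hR, neg_zero, zero_div] at hA hA' hB hB'
  have c1 := congrArg Complex.re hΓ₁
  have c2 := congrArg Complex.im hΓ₁
  have c3 := congrArg Complex.re hΓ₂
  have c4 := congrArg Complex.im hΓ₂
  simp only [Complex.add_re, Complex.add_im, Complex.re_ofReal_mul, Complex.im_ofReal_mul,
    Complex.zero_re, Complex.zero_im] at c1 c2 c3 c4
  have hT : (a₁ * b₂ - a₂ * b₁) * ((y₁' 0).im * (y₁ 0).re - (y₁' 0).re * (y₁ 0).im)
      = (a₃ * b₄ - a₄ * b₃) * ((y₂' 0).im * (y₂ 0).re - (y₂' 0).re * (y₂ 0).im) := by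
    have d1 : a₁ * (y₁' 0).re + a₂ * (y₁ 0).re = -(a₃ * (y₂' 0).re + a₄ * (y₂ 0).re) := by
      linarith
    have d2 : a₁ * (y₁' 0).im + a₂ * (y₁ 0).im = -(a₃ * (y₂' 0).im + a₄ * (y₂ 0).im) := by
      linarith
    have d3 : b₁ * (y₁' 0).re + b₂ * (y₁ 0).re = -(b₃ * (y₂' 0).re + b₄ * (y₂ 0).re) := by
      linarith
    have d4 : b₁ * (y₁' 0).im + b₂ * (y₁ 0).im = -(b₃ * (y₂' 0).im + b₄ * (y₂ 0).im) := by
      linarith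
    have m1 := congrArg₂ (· * ·) d2 d3
    have m2 := congrArg₂ (· * ·) d1 d4
    linear_combination m1 - m2
  have hT' : (a₁ * b₂ - a₂ * b₁) *
        (-((y₁' 0).im * (y₁ 0).re - (y₁' 0).re * (y₁ 0).im) / lam.im)
      = (a₃ * b₄ - a₄ * b₃) *
        (-((y₂' 0).im * (y₂ 0).re - (y₂' 0).re * (y₂ 0).im) / lam.im) := by
    linear_combination (-1 / lam.im) * hT
  have hP := mul_nonneg hρ₁₂.le hA
  have hN := mul_nonpos_of_nonneg_of_nonpos hρ₃₄.le hB
  refine hne ⟨hA' ?_, hB' ?_⟩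
  · exact nonpos_of_mul_nonpos_right (hT'.trans_le hN) hρ₁₂
  · exact nonneg_of_mul_nonneg_right (hP.trans_eq hT') hρ₃₄
end

section
/- If two functions y = (y₁, y₂) and z = (z₁, z₂) both satisfy the transmission conditions Γ₁ = Γ₂ = 0, then the weighted Wronskians with conjugate at the interior point match: ρ₁₂·(y₁(0)·conj(z₁'(0)) - y₁'(0)·conj(z₁(0))) = ρ₃₄·(y₂(0)·conj(z₂'(0)) - y₂'(0)·conj(z₂(0))). -/
open Real

/-- If two pairs `y = (y₁, y₂)` and `z = (z₁, z₂)` of differentiable functions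
both satisfy the transmission conditions `Γ₁ = Γ₂ = 0`, then the weighted
Wronskians with conjugate at the interior point `0` agree:
`ρ₁₂ · W(y₁, conj z₁; 0) = ρ₃₄ · W(y₂, conj z₂; 0)`. -/
theorem weighted_wronskians_match_at_interior_point
    (a₁ a₂ a₃ a₄ b₁ b₂ b₃ b₄ : ℝ)
    (hρ₁₂ : 0 < a₁ * b₂ - a₂ * b₁) (hρ₃₄ : 0 < a₃ * b₄ - a₄ * b₃)
    (y₁ y₁' y₂ y₂' z₁ z₁' z₂ z₂' : ℝ → ℂ)
    (hy₁d : ∀ x ∈ Set.Icc (-π) 0, HasDerivAt y₁ (y₁' x) x)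
    (hy₂d : ∀ x ∈ Set.Icc 0 π, HasDerivAt y₂ (y₂' x) x)
    (hz₁d : ∀ x ∈ Set.Icc (-π) 0, HasDerivAt z₁ (z₁' x) x)
    (hz₂d : ∀ x ∈ Set.Icc 0 π, HasDerivAt z₂ (z₂' x) x)
    (hΓ₁y : (a₁ : ℂ) * y₁' 0 + (a₂ : ℂ) * y₁ 0 + (a₃ : ℂ) * y₂' 0 + (a₄ : ℂ) * y₂ 0 = 0)
    (hΓ₂y : (b₁ : ℂ) * y₁' 0 + (b₂ : ℂ) * y₁ 0 + (b₃ : ℂ) * y₂' 0 + (b₄ : ℂ) * y₂ 0 = 0)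
    (hΓ₁z : (a₁ : ℂ) * z₁' 0 + (a₂ : ℂ) * z₁ 0 + (a₃ : ℂ) * z₂' 0 + (a₄ : ℂ) * z₂ 0 = 0)
    (hΓ₂z : (b₁ : ℂ) * z₁' 0 + (b₂ : ℂ) * z₁ 0 + (b₃ : ℂ) * z₂' 0 + (b₄ : ℂ) * z₂ 0 = 0) :
    ((a₁ * b₂ - a₂ * b₁ : ℝ) : ℂ) *
        (y₁ 0 * (starRingEnd ℂ) (z₁' 0) - y₁' 0 * (starRingEnd ℂ) (z₁ 0)) =
      ((a₃ * b₄ - a₄ * b₃ : ℝ) : ℂ) *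
        (y₂ 0 * (starRingEnd ℂ) (z₂' 0) - y₂' 0 * (starRingEnd ℂ) (z₂ 0)) := by
  have h1 := congrArg (starRingEnd ℂ) hΓ₁z
  have h2 := congrArg (starRingEnd ℂ) hΓ₂z
  simp only [map_add, map_mul, Complex.conj_ofReal, map_zero] at h1 h2
  push_cast
  linear_combination
    (-(b₁ * (starRingEnd ℂ) (z₁' 0) + b₂ * (starRingEnd ℂ) (z₁ 0))) * hΓ₁y
      + (a₃ * y₂' 0 + a₄ * y₂ 0) * h2
      + (a₁ * (starRingEnd ℂ) (z₁' 0) + a₂ * (starRingEnd ℂ) (z₁ 0)) * hΓ₂y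
      - (b₃ * y₂' 0 + b₄ * y₂ 0) * h1
end

section
/- Let φ = (φ₁, φ₂) and χ = (χ₁, χ₂) both solve -y'' + q·y = λ·y on [-π, 0] and on [0, π] respectively, and suppose both φ and χ satisfy the transmission conditions Γ₁ = Γ₂ = 0. Then the Wronskians w₁(x) := φ₁(x)χ₁'(x) - φ₁'(x)χ₁(x) and w₂(x) := φ₂(x)χ₂'(x) - φ₂'(x)χ₂(x) are constant on their respective intervals, and ρ₁₂·w₁ = ρ₃₄·w₂. -/
open Real

/-- The Wronskian of two solutions is constant on a closed interval. -/
theorem wronskian_const_aux (q : ℝ → ℝ) (lam : ℂ) (a b : ℝ) (f f' f'' g g' g'' : ℝ → ℂ)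
    (hf : ∀ x ∈ Set.Icc a b, HasDerivAt f (f' x) x)
    (hf2 : ∀ x ∈ Set.Icc a b, HasDerivAt f' (f'' x) x)
    (hg : ∀ x ∈ Set.Icc a b, HasDerivAt g (g' x) x)
    (hg2 : ∀ x ∈ Set.Icc a b, HasDerivAt g' (g'' x) x)
    (ef : ∀ x ∈ Set.Icc a b, -f'' x + (q x : ℂ) * f x = lam * f x)
    (eg : ∀ x ∈ Set.Icc a b, -g'' x + (q x : ℂ) * g x = lam * g x) :
    ∀ x ∈ Set.Icc a b, ∀ x' ∈ Set.Icc a b,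
      f x * g' x - f' x * g x = f x' * g' x' - f' x' * g x' := by
  have hd : ∀ x ∈ Set.Icc a b, HasDerivAt (fun x => f x * g' x - f' x * g x) 0 x := by
    intro x hx
    have h := ((hf x hx).mul (hg2 x hx)).sub ((hf2 x hx).mul (hg x hx))
    refine h.congr_deriv ?_
    linear_combination g x * ef x hx - f x * eg x hx
  have key : ∀ x ∈ Set.Icc a b,
      f x * g' x - f' x * g x = f a * g' a - f' a * g a :=
    constant_of_has_deriv_right_zero
      (fun x hx => (hd x hx).continuousAt.continuousWithinAt)
      (fun x hx => (hd x (Set.Ico_subset_Icc_self hx)).hasDerivWithinAt)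
  intro x hx x' hx'
  rw [key x hx, key x' hx']

/-- If `φ = (φ₁, φ₂)` and `χ = (χ₁, χ₂)` both solve `-y'' + q y = λ y` on `[-π,0]`
and `[0,π]` respectively, and both satisfy the transmission conditions
`Γ₁ = Γ₂ = 0`, then the Wronskians `w₁ = φ₁χ₁' - φ₁'χ₁` and `w₂ = φ₂χ₂' - φ₂'χ₂`
are constant on their intervals and `ρ₁₂ · w₁ = ρ₃₄ · w₂`. -/
theorem wronskians_constant_and_weighted_equal
    (q : ℝ → ℝ) (hq : ContinuousOn q (Set.Icc (-π) π)) (lam : ℂ)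
    (a₁ a₂ a₃ a₄ b₁ b₂ b₃ b₄ : ℝ)
    (hρ₁₂ : 0 < a₁ * b₂ - a₂ * b₁) (hρ₃₄ : 0 < a₃ * b₄ - a₄ * b₃)
    (φ₁ φ₁' φ₁'' φ₂ φ₂' φ₂'' χ₁ χ₁' χ₁'' χ₂ χ₂' χ₂'' : ℝ → ℂ)
    (hφ₁d : ∀ x ∈ Set.Icc (-π) 0, HasDerivAt φ₁ (φ₁' x) x)
    (hφ₁d2 : ∀ x ∈ Set.Icc (-π) 0, HasDerivAt φ₁' (φ₁'' x) x)
    (hφ₁c : ContinuousOn φ₁'' (Set.Icc (-π) 0))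
    (hφ₂d : ∀ x ∈ Set.Icc 0 π, HasDerivAt φ₂ (φ₂' x) x)
    (hφ₂d2 : ∀ x ∈ Set.Icc 0 π, HasDerivAt φ₂' (φ₂'' x) x)
    (hφ₂c : ContinuousOn φ₂'' (Set.Icc 0 π))
    (hχ₁d : ∀ x ∈ Set.Icc (-π) 0, HasDerivAt χ₁ (χ₁' x) x)
    (hχ₁d2 : ∀ x ∈ Set.Icc (-π) 0, HasDerivAt χ₁' (χ₁'' x) x)
    (hχ₁c : ContinuousOn χ₁'' (Set.Icc (-π) 0))
    (hχ₂d : ∀ x ∈ Set.Icc 0 π, HasDerivAt χ₂ (χ₂' x) x)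
    (hχ₂d2 : ∀ x ∈ Set.Icc 0 π, HasDerivAt χ₂' (χ₂'' x) x)
    (hχ₂c : ContinuousOn χ₂'' (Set.Icc 0 π))
    (heqφ₁ : ∀ x ∈ Set.Icc (-π) 0, -φ₁'' x + (q x : ℂ) * φ₁ x = lam * φ₁ x)
    (heqφ₂ : ∀ x ∈ Set.Icc 0 π, -φ₂'' x + (q x : ℂ) * φ₂ x = lam * φ₂ x)
    (heqχ₁ : ∀ x ∈ Set.Icc (-π) 0, -χ₁'' x + (q x : ℂ) * χ₁ x = lam * χ₁ x)
    (heqχ₂ : ∀ x ∈ Set.Icc 0 π, -χ₂'' x + (q x : ℂ) * χ₂ x = lam * χ₂ x)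
    (hΓ₁φ : (a₁ : ℂ) * φ₁' 0 + (a₂ : ℂ) * φ₁ 0 + (a₃ : ℂ) * φ₂' 0 + (a₄ : ℂ) * φ₂ 0 = 0)
    (hΓ₂φ : (b₁ : ℂ) * φ₁' 0 + (b₂ : ℂ) * φ₁ 0 + (b₃ : ℂ) * φ₂' 0 + (b₄ : ℂ) * φ₂ 0 = 0)
    (hΓ₁χ : (a₁ : ℂ) * χ₁' 0 + (a₂ : ℂ) * χ₁ 0 + (a₃ : ℂ) * χ₂' 0 + (a₄ : ℂ) * χ₂ 0 = 0)
    (hΓ₂χ : (b₁ : ℂ) * χ₁' 0 + (b₂ : ℂ) * χ₁ 0 + (b₃ : ℂ) * χ₂' 0 + (b₄ : ℂ) * χ₂ 0 = 0) :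
    (∀ x ∈ Set.Icc (-π) 0, ∀ x' ∈ Set.Icc (-π) 0,
        φ₁ x * χ₁' x - φ₁' x * χ₁ x = φ₁ x' * χ₁' x' - φ₁' x' * χ₁ x') ∧
    (∀ x ∈ Set.Icc 0 π, ∀ x' ∈ Set.Icc 0 π,
        φ₂ x * χ₂' x - φ₂' x * χ₂ x = φ₂ x' * χ₂' x' - φ₂' x' * χ₂ x') ∧
    ((a₁ * b₂ - a₂ * b₁ : ℝ) : ℂ) * (φ₁ 0 * χ₁' 0 - φ₁' 0 * χ₁ 0) =
      ((a₃ * b₄ - a₄ * b₃ : ℝ) : ℂ) * (φ₂ 0 * χ₂' 0 - φ₂' 0 * χ₂ 0) := by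
  refine ⟨wronskian_const_aux q lam _ _ _ _ _ _ _ _ hφ₁d hφ₁d2 hχ₁d hχ₁d2 heqφ₁ heqχ₁,
    wronskian_const_aux q lam _ _ _ _ _ _ _ _ hφ₂d hφ₂d2 hχ₂d hχ₂d2 heqφ₂ heqχ₂, ?_⟩
  push_cast
  linear_combination
    -((b₁ : ℂ) * χ₁' 0 + b₂ * χ₁ 0) * hΓ₁φ + ((a₃ : ℂ) * φ₂' 0 + a₄ * φ₂ 0) * hΓ₂χ
    + ((b₁ : ℂ) * φ₁' 0 + b₂ * φ₁ 0) * hΓ₁χ - ((a₃ : ℂ) * χ₂' 0 + a₄ * χ₂ 0) * hΓ₂φ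
end
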